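/- (Freedom in the choice of the singular part.) Assume Hypothesis (H), and let T : H → H be any bounded linear operator. Then for every ε ∈ (0, 1/(2 C_R ‖M‖)), the operator B_ε := M + ε⁻¹ A (with domain dom(A)) is boundedly invertible and ‖ B_ε⁻¹ − ( ι_N B_{ε,N}⁻¹ ι_N* + ε π_R T π_R ) ‖ ≤ ( 2 C_R (1 + ‖M‖/c)² + ‖ι_R* T ι_R‖ ) ε. -/

import Mathlib

lemma aux_max {H : Type*} [NormedAddCommGroup H] [InnerProductSpace ℂ H] [CompleteSpace H]
    (A : H →ₗ.[ℂ] H) (hA_dense : Dense (A.domain : Set H)) (hA_skew : A.adjoint = -A)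
    (x z : H) (h : ∀ a : A.domain, inner ℂ z (a : H) = - inner ℂ x (A a)) :
    ∃ hx : x ∈ A.domain, A ⟨x, hx⟩ = z := by
  have h' : ∀ a : A.domain, inner ℂ (-z) (a : H) = inner ℂ x (A a) := by
    intro a; rw [inner_neg_left, h a, neg_neg]
  have hx : x ∈ A.adjoint.domain := LinearPMap.mem_adjoint_domain_of_exists x ⟨-z, h'⟩
  have e : A.adjoint ⟨x, hx⟩ = -z := LinearPMap.adjoint_apply_eq hA_dense ⟨x, hx⟩ h'
  have g : (x, -z) ∈ A.adjoint.graph := by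
    rw [LinearPMap.mem_graph_iff]; exact ⟨⟨x, hx⟩, rfl, e⟩
  rw [hA_skew, LinearPMap.mem_graph_iff] at g
  obtain ⟨y, hy, hz⟩ := g
  have hy' : (y : H) = x := hy
  subst hy'
  exact ⟨y.2, by simpa [LinearPMap.neg_apply] using hz⟩

lemma aux_skew {H : Type*} [NormedAddCommGroup H] [InnerProductSpace ℂ H] [CompleteSpace H]
    (A : H →ₗ.[ℂ] H) (hA_dense : Dense (A.domain : Set H)) (hA_skew : A.adjoint = -A)
    (a b : A.domain) : inner ℂ (A a) (b : H) = - inner ℂ (a : H) (A b) := by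
  have h := LinearPMap.adjoint_isFormalAdjoint hA_dense
  rw [hA_skew] at h
  have := h a b
  rw [LinearPMap.neg_apply, inner_neg_left] at this
  rw [← this, neg_neg]

lemma aux_skew_re {H : Type*} [NormedAddCommGroup H] [InnerProductSpace ℂ H] [CompleteSpace H]
    (A : H →ₗ.[ℂ] H) (hA_dense : Dense (A.domain : Set H)) (hA_skew : A.adjoint = -A)
    (a : A.domain) : (inner ℂ (A a) (a : H)).re = 0 := by
  have h := congrArg Complex.re (aux_skew A hA_dense hA_skew a a)
  have h2 := congrArg Complex.re (inner_conj_symm (𝕜 := ℂ) (A a) (a : H))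
  simp only [Complex.conj_re, Complex.neg_re] at h h2
  linarith

lemma aux_coer {H : Type*} [NormedAddCommGroup H] [InnerProductSpace ℂ H] [CompleteSpace H]
    (M : H →L[ℂ] H) (c : ℝ)
    (hM : ∀ x : H, c * ‖x‖ ^ 2 ≤ (inner ℂ (M x) x : ℂ).re)
    (A : H →ₗ.[ℂ] H) (hA_dense : Dense (A.domain : Set H)) (hA_skew : A.adjoint = -A)
    (k : ℝ) (x : A.domain) :
    c * ‖(x : H)‖ ^ 2 ≤ (inner ℂ (M x + k • A x) (x : H)).re := by
  rw [inner_add_left, ← Complex.coe_smul, inner_smul_left, Complex.conj_ofReal, Complex.add_re,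
    Complex.re_ofReal_mul, aux_skew_re A hA_dense hA_skew]
  simpa using hM x

lemma aux_bd {H : Type*} [NormedAddCommGroup H] [InnerProductSpace ℂ H] (c : ℝ)
    (x y : H) (h : c * ‖x‖ ^ 2 ≤ (inner ℂ y x).re) : c * ‖x‖ ≤ ‖y‖ := by
  have h1 : (inner ℂ y x).re ≤ ‖y‖ * ‖x‖ :=
    (Complex.re_le_norm _).trans (norm_inner_le_norm y x)
  rcases (norm_nonneg x).eq_or_lt with h0 | h0
  · rw [← h0]; simp
  · nlinarith

lemma aux_inv {H : Type*} [NormedAddCommGroup H] [InnerProductSpace ℂ H] [CompleteSpace H]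
    (M : H →L[ℂ] H) (c : ℝ) (hc : 0 < c)
    (hM : ∀ x : H, c * ‖x‖ ^ 2 ≤ (inner ℂ (M x) x : ℂ).re)
    (A : H →ₗ.[ℂ] H) (hA_dense : Dense (A.domain : Set H)) (hA_skew : A.adjoint = -A)
    (k : ℝ) (hk : k ≠ 0) :
    ∃ Binv : H →L[ℂ] H, (∀ x : A.domain, Binv (M (x : H) + k • A x) = x) ∧
      (∀ y : H, ∃ x : A.domain, M (x : H) + k • A x = y) := by
  let B : A.domain →ₗ[ℂ] H := M.toLinearMap ∘ₗ A.domain.subtype + (k : ℂ) • A.toFun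
  have hB : ∀ x : A.domain, B x = M (x : H) + k • A x := by
    intro x
    rw [← Complex.coe_smul]; rfl
  have hlow : ∀ x : A.domain, c * ‖(x : H)‖ ≤ ‖B x‖ := by
    intro x
    apply aux_bd
    rw [hB]; exact aux_coer M c hM A hA_dense hA_skew k x
  have hinj : Function.Injective B := by
    rw [injective_iff_map_eq_zero]
    intro x hx
    have := hlow x
    rw [hx, norm_zero] at this
    have : ‖(x : H)‖ = 0 := by
      have := norm_nonneg (x : H)
      nlinarith
    exact Subtype.ext (norm_eq_zero.1 this)
  have horth : (LinearMap.range B)ᗮ = ⊥ := by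
    rw [Submodule.eq_bot_iff]
    intro y hy
    have hy' : ∀ x : A.domain, inner ℂ y (M x + k • A x) = 0 := by
      intro x
      rw [← hB]
      exact Submodule.inner_left_of_mem_orthogonal (LinearMap.mem_range_self B x) hy
    obtain ⟨hyd, -⟩ := aux_max A hA_dense hA_skew y (((k⁻¹ : ℝ) : ℂ) • M.adjoint y) (by
      intro a
      have := hy' a
      rw [inner_add_right, ← Complex.coe_smul, inner_smul_right] at this
      rw [inner_smul_left, Complex.conj_ofReal, ContinuousLinearMap.adjoint_inner_left]
      have hk' : (k : ℂ) ≠ 0 := by exact_mod_cast hk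
      push_cast
      field_simp
      linear_combination this)
    have h1 := aux_coer M c hM A hA_dense hA_skew k ⟨y, hyd⟩
    have h2 := hy' ⟨y, hyd⟩
    rw [← inner_conj_symm, h2] at h1
    simp only [map_zero, Complex.zero_re] at h1
    have : ‖y‖ ^ 2 ≤ 0 := by
      by_contra hcon
      push Not at hcon
      have := mul_pos hc hcon
      linarith
    exact norm_eq_zero.1 (by nlinarith [norm_nonneg y])
  have hsurj : Function.Surjective B := by
    intro y
    have hy : y ∈ (LinearMap.range B).topologicalClosure := by
      rw [Submodule.topologicalClosure_eq_top_iff.2 horth]; trivial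
    have hy2 : y ∈ closure (LinearMap.range B : Set H) := hy
    obtain ⟨u, hu, hlim⟩ := mem_closure_iff_seq_limit.1 hy2
    choose x hx using hu
    have hcau : CauchySeq (fun n => (x n : H)) := by
      have hcu := hlim.cauchySeq
      rw [Metric.cauchySeq_iff] at hcu ⊢
      intro e he
      obtain ⟨n0, hn0⟩ := hcu (c * e) (by positivity)
      refine ⟨n0, fun m hm n hn => ?_⟩
      have h1 := hn0 m hm n hn
      have h2 := hlow (x m - x n)
      rw [map_sub, hx, hx, ← dist_eq_norm, Submodule.coe_sub, ← dist_eq_norm] at h2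
      exact lt_of_mul_lt_mul_left (h2.trans_lt h1) hc.le
    obtain ⟨x0, hx0⟩ := cauchySeq_tendsto_of_complete hcau
    have hAx : Filter.Tendsto (fun n => A (x n)) Filter.atTop
        (nhds (((k⁻¹ : ℝ) : ℂ) • (y - M x0))) := by
      have h1 : Filter.Tendsto (fun n => ((k⁻¹ : ℝ) : ℂ) • (u n - M (x n))) Filter.atTop
        (nhds (((k⁻¹ : ℝ) : ℂ) • (y - M x0))) :=
        (hlim.sub ((M.continuous.tendsto x0).comp hx0)).const_smul _
      refine h1.congr fun n => ?_
      rw [← hx n, hB, add_sub_cancel_left, Complex.coe_smul, smul_smul, inv_mul_cancel₀ hk,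
        one_smul]
    obtain ⟨hd, hz⟩ := aux_max A hA_dense hA_skew x0 (((k⁻¹ : ℝ) : ℂ) • (y - M x0)) (by
      intro a
      have l1 := hAx.inner (𝕜 := ℂ) (tendsto_const_nhds (x := (a : H)))
      have l2 := (hx0.inner (𝕜 := ℂ) (tendsto_const_nhds (x := A a))).neg
      refine tendsto_nhds_unique l1 (l2.congr fun n => ?_)
      exact (aux_skew A hA_dense hA_skew (x n) a).symm)
    refine ⟨⟨x0, hd⟩, ?_⟩
    rw [hB, hz, Complex.coe_smul, smul_smul, mul_inv_cancel₀ hk, one_smul]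
    simp
  let e := LinearEquiv.ofBijective B ⟨hinj, hsurj⟩
  refine ⟨(A.domain.subtype ∘ₗ e.symm.toLinearMap).mkContinuous c⁻¹ ?_, ?_, ?_⟩
  · intro y
    obtain ⟨x, rfl⟩ := e.surjective y
    have := hlow x
    simp only [LinearMap.comp_apply, LinearEquiv.coe_coe, LinearEquiv.symm_apply_apply,
      Submodule.subtype_apply]
    rw [inv_mul_eq_div, le_div_iff₀ hc, mul_comm]
    exact this
  · intro x
    have : M (x : H) + k • A x = e x := (hB x).symm
    rw [this]
    simp
  · intro y
    obtain ⟨x, hx⟩ := hsurj y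
    exact ⟨x, by rw [← hB, hx]⟩


/-- **Freedom in the choice of the singular part.**
Under Hypothesis (H), for any bounded operator `T : H → H` and every
`ε ∈ (0, 1/(2 C_R ‖M‖))`, the operator `B_ε = M + ε⁻¹ A` is boundedly invertible and
`‖B_ε⁻¹ − (ι_N B_{ε,N}⁻¹ ι_N* + ε π_R T π_R)‖ ≤ (2 C_R (1 + ‖M‖/c)² + ‖ι_R* T ι_R‖) ε`. -/
theorem statement11
    {H : Type*} [NormedAddCommGroup H] [InnerProductSpace ℂ H] [CompleteSpace H]
    -- `M` is a bounded operator with `Re⟪M x, x⟫ ≥ c ‖x‖²`, `c > 0`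
    (M : H →L[ℂ] H) (c : ℝ) (hc : 0 < c)
    (hM : ∀ x : H, c * ‖x‖ ^ 2 ≤ (inner ℂ (M x) x : ℂ).re)
    -- `A` is densely defined and skew-selfadjoint
    (A : H →ₗ.[ℂ] H) (hA_dense : Dense (A.domain : Set H)) (hA_skew : A.adjoint = -A)
    -- `N` is a closed subspace, `R = Nᗮ`
    (N : Submodule ℂ H) [CompleteSpace N]
    (C_R : ℝ) (hC_R : 0 < C_R)
    -- Hypothesis (H)(a): `N ⊆ dom A` and `A π_N` is bounded
    (hHa_sub : N ≤ A.domain)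
    (hHa_bdd : ∃ Ca : ℝ, ∀ x : A.domain, (x : H) ∈ N → ‖A x‖ ≤ Ca * ‖(x : H)‖)
    -- Hypothesis (H)(b): `π_R A ⊆ A π_R`
    (hHb : ∀ x : A.domain,
      ∃ hx : ((Submodule.orthogonalProjectionOnto Nᗮ (x : H) : H)) ∈ A.domain,
        (Submodule.orthogonalProjectionOnto Nᗮ (A x) : H)
          = A ⟨(Submodule.orthogonalProjectionOnto Nᗮ (x : H) : H), hx⟩)
    -- Hypothesis (H)(c): the compression `ι_R* A ι_R`, with domain `dom(A) ∩ R`, is a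
    -- bijection onto `R` with bounded inverse of norm at most `C_R`
    (hHc : ∃ J : Nᗮ →L[ℂ] Nᗮ, ‖J‖ ≤ C_R ∧
      (∀ (x : A.domain) (hx : (x : H) ∈ Nᗮ),
        J (Submodule.orthogonalProjectionOnto Nᗮ (A x)) = ⟨(x : H), hx⟩) ∧
      (∀ y : Nᗮ, ∃ (x : A.domain) (hx : (x : H) ∈ Nᗮ),
        Submodule.orthogonalProjectionOnto Nᗮ (A x) = y))
    (T : H →L[ℂ] H)
    (ε : ℝ) (hε : ε ∈ Set.Ioo (0 : ℝ) (1 / (2 * C_R * ‖M‖))) :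
    ∃ (Binv : H →L[ℂ] H) (JN : N →L[ℂ] N),
      -- `Binv` is the bounded inverse of `B_ε = M + ε⁻¹ A`
      (∀ x : A.domain, Binv (M (x : H) + ε⁻¹ • A x) = x) ∧
      (∀ y : H, ∃ x : A.domain, M (x : H) + ε⁻¹ • A x = y) ∧
      -- `JN` is the bounded inverse of `B_{ε,N} = ι_N* M ι_N + ε⁻¹ ι_N* A ι_N` on `N`
      (∀ x : N,
        JN (Submodule.orthogonalProjectionOnto N (M (x : H))
            + ε⁻¹ • Submodule.orthogonalProjectionOnto N (A ⟨(x : H), hHa_sub x.2⟩)) = x) ∧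
      (∀ y : N, ∃ x : N,
        Submodule.orthogonalProjectionOnto N (M (x : H))
            + ε⁻¹ • Submodule.orthogonalProjectionOnto N (A ⟨(x : H), hHa_sub x.2⟩) = y) ∧
      -- the estimate
      ‖Binv - (N.subtypeL.comp (JN.comp (Submodule.orthogonalProjectionOnto N))
            + ε • (Nᗮ.subtypeL.comp (Submodule.orthogonalProjectionOnto Nᗮ)).comp
                (T.comp (Nᗮ.subtypeL.comp (Submodule.orthogonalProjectionOnto Nᗮ))))‖
        ≤ (2 * C_R * (1 + ‖M‖ / c) ^ 2
            + ‖(Submodule.orthogonalProjectionOnto Nᗮ).comp (T.comp Nᗮ.subtypeL)‖) * ε := by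
  have hε0 : 0 < ε := hε.1
  have hk : ε⁻¹ ≠ 0 := inv_ne_zero hε0.ne'
  obtain ⟨J, hJ, hJl, -⟩ := hHc
  set P := Submodule.orthogonalProjectionOnto N with hP
  set Q := Submodule.orthogonalProjectionOnto Nᗮ with hQ
  have hdec : ∀ x : H, (P x : H) + (Q x : H) = x := fun x =>
    Submodule.starProjection_add_starProjection_orthogonal (K := N) x
  have hPP : ∀ x : N, P (x : H) = x := fun x =>
    Submodule.orthogonalProjectionOnto_mem_subspace_eq_self x
  have hQQ : ∀ x : Nᗮ, Q (x : H) = x := fun x =>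
    Submodule.orthogonalProjectionOnto_mem_subspace_eq_self x
  have hPQ : ∀ x : Nᗮ, P (x : H) = 0 := fun x =>
    Submodule.orthogonalProjectionOnto_apply_of_mem_orthogonal x.2
  have hQP : ∀ x : N, Q (x : H) = 0 := by
    intro x
    have h1 := hdec (x : H)
    rw [hPP] at h1
    exact Subtype.ext (by simpa using h1)
  have hPi : ∀ (z : H) (u : N), inner ℂ (P z : H) (u : H) = inner ℂ z (u : H) := by
    intro z u
    conv_rhs => rw [← hdec z, inner_add_left]
    rw [Submodule.inner_left_of_mem_orthogonal u.2 (Q z).2, add_zero]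
  have hAP : ∀ x : A.domain, (P (A x) : H) = A ⟨(P (x : H) : H), hHa_sub (P (x : H)).2⟩ := by
    intro x
    obtain ⟨hx, h⟩ := hHb x
    have h1 : x = (⟨(P (x : H) : H), hHa_sub (P (x : H)).2⟩ : A.domain)
        + (⟨(Q (x : H) : H), hx⟩ : A.domain) := Subtype.ext (hdec (x : H)).symm
    have h2 : A x = A ⟨(P (x : H) : H), hHa_sub (P (x : H)).2⟩ + A ⟨(Q (x : H) : H), hx⟩ := by
      rw [← LinearPMap.map_add, ← h1]
    have h3 := hdec (A x)
    rw [← h] at h2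
    exact add_right_cancel (h3.trans h2)
  have hAN : ∀ x : N, (P (A ⟨(x : H), hHa_sub x.2⟩) : H) = A ⟨(x : H), hHa_sub x.2⟩ := by
    intro x
    have h := hAP ⟨(x : H), hHa_sub x.2⟩
    simp only [hPP] at h
    exact h
  obtain ⟨Binv, hBl, hBs⟩ := aux_inv M c hc hM A hA_dense hA_skew ε⁻¹ hk
  let M' : H →L[ℂ] H := N.subtypeL.comp (P.comp (M.comp (N.subtypeL.comp P)))
    + (c : ℂ) • Nᗮ.subtypeL.comp Q
  have hM'a : ∀ x : H, M' x = (P (M (P x : H)) : H) + (c : ℂ) • (Q x : H) := fun x => rfl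
  have hM' : ∀ x : H, c * ‖x‖ ^ 2 ≤ (inner ℂ (M' x) x : ℂ).re := by
    intro x
    have o : inner ℂ (P x : H) (Q x : H) = 0 :=
      Submodule.inner_right_of_mem_orthogonal (P x).2 (Q x).2
    have o2 : inner ℂ (P (M (P x : H)) : H) (Q x : H) = 0 :=
      Submodule.inner_right_of_mem_orthogonal (P _).2 (Q x).2
    have o3 : inner ℂ (Q x : H) (P x : H) = 0 :=
      Submodule.inner_left_of_mem_orthogonal (P x).2 (Q x).2
    have e1 : inner ℂ (M' x) x = inner ℂ (M (P x : H)) (P x : H)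
        + (c : ℂ) * inner ℂ (Q x : H) (Q x : H) := by
      have hsplit : ∀ z : H, inner ℂ z x = inner ℂ z (P x : H) + inner ℂ z (Q x : H) := by
        intro z
        rw [← inner_add_right, hdec]
      rw [hsplit, hM'a, inner_add_left, inner_add_left, hPi, o2,
        inner_smul_left, inner_smul_left, o3, Complex.conj_ofReal]
      ring
    have e2 : ‖x‖ ^ 2 = ‖(P x : H)‖ ^ 2 + ‖(Q x : H)‖ ^ 2 := by
      have := norm_add_sq_eq_norm_sq_add_norm_sq_of_inner_eq_zero (𝕜 := ℂ) (P x : H) (Q x : H) o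
      rw [hdec] at this
      nlinarith
    have e3 : (inner ℂ (Q x : H) (Q x : H)).re = ‖(Q x : H)‖ ^ 2 :=
      inner_self_eq_norm_sq (𝕜 := ℂ) (Q x : H)
    rw [e1, Complex.add_re, Complex.re_ofReal_mul, e3, e2]
    have := hM (P x)
    linarith
  obtain ⟨Binv', hBl', hBs'⟩ := aux_inv M' c hc hM' A hA_dense hA_skew ε⁻¹ hk
  have hJNl : ∀ x : N, (P.comp (Binv'.comp N.subtypeL))
      (P (M (x : H)) + ε⁻¹ • P (A ⟨(x : H), hHa_sub x.2⟩)) = x := by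
    intro x
    have h := hBl' ⟨(x : H), hHa_sub x.2⟩
    have h2 : ((P (M (x : H)) + ε⁻¹ • P (A ⟨(x : H), hHa_sub x.2⟩) : N) : H)
        = M' (x : H) + ε⁻¹ • A ⟨(x : H), hHa_sub x.2⟩ := by
      rw [hM'a, hPP, hQP, Submodule.coe_add, ← Complex.coe_smul, ← Complex.coe_smul,
        Submodule.coe_smul, hAN]
      simp
    rw [ContinuousLinearMap.comp_apply, ContinuousLinearMap.comp_apply, Submodule.subtypeL_apply,
      h2, h, hPP]
  have hJNs : ∀ y : N, ∃ x : N,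
      P (M (x : H)) + ε⁻¹ • P (A ⟨(x : H), hHa_sub x.2⟩) = y := by
    intro y
    obtain ⟨x, hx⟩ := hBs' y
    refine ⟨P (x : H), ?_⟩
    have h := congrArg P hx
    rw [hPP, hM'a, ← Complex.coe_smul, map_add, map_add, map_smul, map_smul, hPP, hPQ] at h
    rw [← h, ← hAP, hPP, smul_zero, add_zero, Complex.coe_smul]
  refine ⟨Binv, P.comp (Binv'.comp N.subtypeL), hBl, hBs, hJNl, hJNs, ?_⟩
  set JN := P.comp (Binv'.comp N.subtypeL) with hJN
  clear_value JN
  apply ContinuousLinearMap.opNorm_le_bound _ (by positivity)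
  intro y
  obtain ⟨x, hx⟩ := hBs y
  have hxb : c * ‖(x : H)‖ ≤ ‖y‖ := by
    rw [← hx]
    exact aux_bd c _ _ (aux_coer M c hM A hA_dense hA_skew ε⁻¹ x)
  have hBy : Binv y = x := by rw [← hx]; exact hBl x
  -- the `R` component
  obtain ⟨hQx, hAQ⟩ := hHb x
  have hv : Q (x : H) = ε • J (Q (y - M x)) := by
    have h1 := hJl ⟨(Q (x : H) : H), hQx⟩ (Q (x : H)).2
    rw [← hAQ, hQQ] at h1
    have h2 : y - M x = ((ε⁻¹ : ℝ) : ℂ) • A x := by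
      rw [← hx, Complex.coe_smul]; simp
    rw [h2, map_smul, map_smul, h1, Complex.coe_smul, smul_smul, mul_inv_cancel₀ hε0.ne', one_smul]
  have hMx : ‖M x‖ ≤ ‖M‖ / c * ‖y‖ := by
    refine (M.le_opNorm _).trans ?_
    rw [div_mul_eq_mul_div, le_div_iff₀ hc, mul_assoc]
    exact mul_le_mul_of_nonneg_left (by linarith) (norm_nonneg M)
  have hvn : ‖(Q (x : H) : H)‖ ≤ ε * (C_R * ((1 + ‖M‖ / c) * ‖y‖)) := by
    change ‖Q (x : H)‖ ≤ _
    rw [hv, norm_smul, Real.norm_of_nonneg hε0.le]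
    refine mul_le_mul_of_nonneg_left ?_ hε0.le
    refine (J.le_opNorm _).trans (mul_le_mul hJ ?_ (norm_nonneg _) hC_R.le)
    refine (Submodule.norm_orthogonalProjectionOnto_apply_le _ _).trans ((norm_sub_le _ _).trans ?_)
    linarith
  -- the `N` component
  have hu : JN (P y) = P (x : H) + JN (P (M (Q (x : H) : H))) := by
    have h1 := hJNl (P (x : H))
    rw [← hAP, hPP] at h1
    conv_rhs => rw [← h1]
    rw [← map_add]
    congr 1
    rw [← hx, map_add]
    have h2 : M (x : H) = M (P (x : H) : H) + M (Q (x : H) : H) := by rw [← map_add, hdec]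
    rw [h2, map_add, ← Complex.coe_smul, ← Complex.coe_smul, map_smul]
    abel
  obtain ⟨w, hw⟩ := hJNs (P (M (Q (x : H) : H)))
  have hw2 : JN (P (M (Q (x : H) : H))) = w := by rw [← hw]; exact hJNl w
  have hwb : c * ‖(w : H)‖ ≤ ‖M (Q (x : H) : H)‖ := by
    apply aux_bd
    have h1 := aux_coer M c hM A hA_dense hA_skew ε⁻¹ ⟨(w : H), hHa_sub w.2⟩
    rw [← hPi, ← Complex.coe_smul, map_add, map_smul, Complex.coe_smul, hw, hPi] at h1
    exact h1
  have hwn : ‖(w : H)‖ ≤ ‖M‖ / c * ‖(Q (x : H) : H)‖ := by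
    rw [div_mul_eq_mul_div, le_div_iff₀ hc, mul_comm]
    exact hwb.trans (M.le_opNorm _)
  set S := Q.comp (T.comp Nᗮ.subtypeL) with hS
  have hSn : ‖S (Q y)‖ ≤ ‖S‖ * ‖y‖ :=
    (S.le_opNorm _).trans (mul_le_mul_of_nonneg_left
      (Submodule.norm_orthogonalProjectionOnto_apply_le _ _) (norm_nonneg _))
  have hfin : (Binv - (N.subtypeL.comp (JN.comp P)
            + ε • (Nᗮ.subtypeL.comp Q).comp (T.comp (Nᗮ.subtypeL.comp Q)))) y
      = (Q (x : H) : H) - (w : H) - ε • (S (Q y) : H) := by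
    have : (Binv - (N.subtypeL.comp (JN.comp P)
            + ε • (Nᗮ.subtypeL.comp Q).comp (T.comp (Nᗮ.subtypeL.comp Q)))) y
      = Binv y - ((JN (P y) : H) + ε • (S (Q y) : H)) := rfl
    rw [this, hBy, hu, hw2, Submodule.coe_add]
    rw [← sub_eq_of_eq_add' (hdec (x : H)).symm]
    abel
  rw [hfin]
  have hn3 : ‖ε • (S (Q y) : H)‖ ≤ ε * (‖S‖ * ‖y‖) := by
    rw [norm_smul, Real.norm_of_nonneg hε0.le]
    exact mul_le_mul_of_nonneg_left hSn hε0.le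
  have hMc : 0 ≤ ‖M‖ / c := by positivity
  have hn4 : (1 + ‖M‖ / c) * ‖(Q (x : H) : H)‖
      ≤ (1 + ‖M‖ / c) * (ε * (C_R * ((1 + ‖M‖ / c) * ‖y‖))) :=
    mul_le_mul_of_nonneg_left hvn (by positivity)
  have hn5 : 0 ≤ C_R * (1 + ‖M‖ / c) ^ 2 * ε * ‖y‖ := by positivity
  have hn6 := norm_sub_le ((Q (x : H) : H) - (w : H)) (ε • (S (Q y) : H))
  have hn7 := norm_sub_le (Q (x : H) : H) (w : H)
  nlinarith
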